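/- Under the compact nonzero-sum game setup with the quantization condition lim_{δ→0} ω_δ(2δ) = 0, let T ∈ ℕ be the horizon and for each δ > 0 let π*_δ be a Markov perfect Nash equilibrium of the finite δ-model (which exists by Rieder's theorem). Then for each player i = 1,…,N and each t = 0,…,T, sup_{x∈X} |Ĵ*_{δ,t}(π^{*,-i}_δ; x) − J*_t(π^{*,-i}_δ; x)| → 0 as δ → 0, where Ĵ*_{δ,t}(π^{*,-i}_δ;·) is the piecewise-constant extension to X of the finite-model best-response value at time t and J*_t(π^{*,-i}_δ;·) is the original-model best-response value at time t against the extended equilibrium policies. -/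

import Mathlib

open MeasureTheory Filter Topology

noncomputable section

/-- Total variation distance between two measures:
`‖μ − ν‖_TV = 2 sup_{D measurable} |μ(D) − ν(D)|`. -/
def tvDist {α : Type*} [MeasurableSpace α] (μ ν : Measure α) : ℝ :=
  2 * ⨆ D : {D : Set α // MeasurableSet D}, |(μ D.1).toReal - (ν D.1).toReal|

/-- The normalized restriction `ν^z_δ` of `ν` to the quantization cell `Q⁻¹{z}`. -/
def cellMeasure {X : Type*} [MeasurableSpace X] (ν : Measure X) (Q : X → X) (z : X) :
    Measure X :=
  (ν (Q ⁻¹' {z}))⁻¹ • ν.restrict (Q ⁻¹' {z})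

/-!
Opponents' policies are constant on the cells of the quantizer, so one backward step of the finite
model differs from the same step of the original model by at most twice the oscillation of the
one-stage objective over state-action pairs at distance at most `2δ`, once for averaging over the
cell and once for moving the action into the net, plus the error inherited from the next stage. The
finite-model continuation value is constant on the cells as well, hence it integrates equally well
against the quantized kernel, and the oscillation is controlled by the modulus of the cost and by
`ω_δ(2δ)`. Summing over the stages gives a bound that vanishes with `δ`.
-/

section BoundedIntegrals

variable {Ω : Type*} [MeasurableSpace Ω] {μ : Measure Ω} {f g : Ω → ℝ} {C M : ℝ}

lemma measurable_measureReal_setOf_le [IsFiniteMeasure μ] :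
    Measurable fun s => μ.real {ω | s ≤ f ω} := by
  have h : Antitone fun s => μ.real {ω | s ≤ f ω} :=
    fun s t hst => measureReal_mono fun ω hω => hst.trans hω
  exact h.measurable

variable [IsProbabilityMeasure μ]

lemma abs_integral_le_of_abs_le (hf : ∀ ω, |f ω| ≤ C) : |∫ ω, f ω ∂μ| ≤ C := by
  simpa using norm_integral_le_of_norm_le_const (μ := μ) (f := f) (Eventually.of_forall hf)

lemma abs_integral_sub_integral_le (hf : Integrable f μ) (hg : Integrable g μ)
    (hfg : ∀ᵐ ω ∂μ, |f ω - g ω| ≤ C) : |∫ ω, f ω ∂μ - ∫ ω, g ω ∂μ| ≤ C := by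
  rw [← integral_sub hf hg]
  simpa using norm_integral_le_of_norm_le_const (f := fun ω => f ω - g ω) hfg

lemma integral_eq_setIntegral_measureReal_sub (hf : Measurable f) (hM : ∀ ω, |f ω| ≤ M) :
    ∫ ω, f ω ∂μ = (∫ s in Set.Ioc 0 (2 * M), μ.real {ω | s ≤ f ω + M}) - M := by
  have hint : Integrable f μ :=
    .of_bound hf.aestronglyMeasurable M (Eventually.of_forall hM)
  have hlayer : ∫ ω, (f ω + M) ∂μ = ∫ s in Set.Ioc 0 (2 * M), μ.real {ω | s ≤ f ω + M} :=
    (hint.add (integrable_const M)).integral_eq_integral_Ioc_meas_le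
      (Eventually.of_forall fun ω => by
        change 0 ≤ f ω + M
        linarith [neg_le_of_abs_le (hM ω)])
      (Eventually.of_forall fun ω => by
        change f ω + M ≤ 2 * M
        linarith [le_of_abs_le (hM ω)])
  rw [← hlayer, integral_add hint (integrable_const M)]
  simp

lemma continuous_integral_of_setwise {Y : Type*} [TopologicalSpace Y] [FirstCountableTopology Y]
    {p : Y → Measure Ω} [∀ y, IsProbabilityMeasure (p y)]
    (hp : ∀ D, MeasurableSet D → Continuous fun y => (p y D).toReal)
    (hf : Measurable f) (hM : ∀ ω, |f ω| ≤ M) : Continuous fun y => ∫ ω, f ω ∂p y := by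
  simp_rw [fun y => integral_eq_setIntegral_measureReal_sub (μ := p y) hf hM]
  refine (continuous_of_dominated (bound := fun _ => 1)
    (fun y => measurable_measureReal_setOf_le.aestronglyMeasurable)
    (fun y => Eventually.of_forall fun s => ?_) (integrable_const 1)
    (Eventually.of_forall fun s => hp _ ?_)).sub continuous_const
  · rw [Real.norm_of_nonneg measureReal_nonneg]
    exact measureReal_le_one
  · exact measurableSet_le measurable_const (hf.add_const M)

lemma continuous_integral_of_continuous_uncurry {Y : Type*} [TopologicalSpace Y]
    [FirstCountableTopology Y] [TopologicalSpace Ω] [OpensMeasurableSpace Ω] {F : Y → Ω → ℝ}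
    (hF : Continuous (Function.uncurry F)) (hM : ∀ y ω, |F y ω| ≤ M) :
    Continuous fun y => ∫ ω, F y ω ∂μ :=
  continuous_of_dominated (bound := fun _ => M)
    (fun y => (hF.uncurry_left y).measurable.aestronglyMeasurable)
    (fun y => Eventually.of_forall (hM y)) (integrable_const M)
    (Eventually.of_forall fun ω => hF.uncurry_right ω)

end BoundedIntegrals

section TotalVariation

variable {Ω : Type*} [MeasurableSpace Ω] (μ ν : Measure Ω) [IsProbabilityMeasure μ]
  [IsProbabilityMeasure ν]

lemma abs_measureReal_sub_measureReal_le_one (D : Set Ω) : |μ.real D - ν.real D| ≤ 1 :=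
  abs_sub_le_of_nonneg_of_le measureReal_nonneg measureReal_le_one measureReal_nonneg
    measureReal_le_one

lemma tvDist_le_two : tvDist μ ν ≤ 2 := by
  have hsup : (⨆ D : {D : Set Ω // MeasurableSet D}, |μ.real D.1 - ν.real D.1|) ≤ 1 :=
    Real.iSup_le (fun D => abs_measureReal_sub_measureReal_le_one μ ν D.1) zero_le_one
  calc tvDist μ ν ≤ 2 * 1 := mul_le_mul_of_nonneg_left hsup zero_le_two
    _ = 2 := mul_one 2

lemma abs_measureReal_sub_measureReal_le_tvDist {D : Set Ω} (hD : MeasurableSet D) :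
    |μ.real D - ν.real D| ≤ tvDist μ ν / 2 := by
  have hsup : |μ.real D - ν.real D| ≤
      ⨆ D : {D : Set Ω // MeasurableSet D}, |μ.real D.1 - ν.real D.1| :=
    le_ciSup (f := fun D : {D : Set Ω // MeasurableSet D} => |μ.real D.1 - ν.real D.1|)
      ⟨1, Set.forall_mem_range.2 fun D => abs_measureReal_sub_measureReal_le_one μ ν D.1⟩ ⟨D, hD⟩
  rwa [tvDist, mul_div_cancel_left₀ _ two_ne_zero]

lemma abs_integral_sub_integral_le_mul_tvDist {f : Ω → ℝ} {M : ℝ} (hf : Measurable f)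
    (hM : ∀ ω, |f ω| ≤ M) : |∫ ω, f ω ∂μ - ∫ ω, f ω ∂ν| ≤ M * tvDist μ ν := by
  have hM₀ : 0 ≤ M := (abs_nonneg _).trans (abs_integral_le_of_abs_le (μ := μ) hM)
  have hint (ρ : Measure Ω) [IsProbabilityMeasure ρ] :
      IntegrableOn (fun s => ρ.real {ω | s ≤ f ω + M}) (Set.Ioc 0 (2 * M)) :=
    .of_bound measure_Ioc_lt_top measurable_measureReal_setOf_le.aestronglyMeasurable 1
      (Eventually.of_forall fun s => by
        rw [Real.norm_of_nonneg measureReal_nonneg]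
        exact measureReal_le_one)
  rw [integral_eq_setIntegral_measureReal_sub (μ := μ) hf hM,
    integral_eq_setIntegral_measureReal_sub (μ := ν) hf hM, sub_sub_sub_cancel_right,
    ← integral_sub (hint μ) (hint ν)]
  calc |∫ s in Set.Ioc 0 (2 * M), (μ.real {ω | s ≤ f ω + M} - ν.real {ω | s ≤ f ω + M})|
      ≤ tvDist μ ν / 2 * volume.real (Set.Ioc 0 (2 * M)) :=
        norm_setIntegral_le_of_norm_le_const
          (f := fun s => μ.real {ω | s ≤ f ω + M} - ν.real {ω | s ≤ f ω + M})
          measure_Ioc_lt_top fun s _ => abs_measureReal_sub_measureReal_le_tvDist μ ν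
            (measurableSet_le measurable_const (hf.add_const M))
    _ = M * tvDist μ ν := by
        rw [Real.volume_real_Ioc_of_le (by linarith)]
        ring

end TotalVariation

section UnilateralDeviation

variable {ι : Type*} [Fintype ι] [DecidableEq ι] {A : ι → Type*}

lemma dist_update_update_le [∀ j, PseudoMetricSpace (A j)] (b : ∀ j, A j) (i : ι) (a a' : A i) :
    dist (Function.update b i a) (Function.update b i a') ≤ dist a a' := by
  refine (dist_pi_le_iff dist_nonneg).2 fun j => ?_
  obtain rfl | hj := eq_or_ne j i
  · simp only [Function.update_self, le_refl]
  · simp only [Function.update_of_ne hj, dist_self, dist_nonneg]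

variable [∀ j, MeasurableSpace (A j)]

/-- The joint action law when player `i` plays the pure action `a` and every other player `j`
plays the mixed action `m j`; the entry `m i` is ignored. -/
def deviation (m : ∀ j, Measure (A j)) (i : ι) (a : A i) : Measure (∀ j, A j) :=
  Measure.pi (Function.update m i (Measure.dirac a))

variable (m : ∀ j, Measure (A j)) [∀ j, IsProbabilityMeasure (m j)] (i : ι)

instance isProbabilityMeasure_update_dirac (a : A i) (j : ι) :
    IsProbabilityMeasure (Function.update m i (Measure.dirac a) j) := by
  obtain rfl | hj := eq_or_ne j i
  · rw [Function.update_self]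
    infer_instance
  · rw [Function.update_of_ne hj]
    infer_instance

instance isProbabilityMeasure_deviation (a : A i) : IsProbabilityMeasure (deviation m i a) :=
  Measure.pi.instIsProbabilityMeasure _

lemma map_update_pi_eq_deviation (a : A i) :
    (Measure.pi m).map (fun b => Function.update b i a) = deviation m i a := by
  let g : ∀ j, A j → A j := Function.update (fun _ => id) i fun _ => a
  have hg (j : ι) : Measurable (g j) := by
    obtain rfl | hj := eq_or_ne j i
    · simp only [g, Function.update_self, measurable_const]
    · simp only [g, Function.update_of_ne hj, measurable_id]
  have hprob (j : ι) := Measure.isProbabilityMeasure_map (μ := m j) (hg j).aemeasurable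
  have hupdate : (fun b : ∀ j, A j => Function.update b i a) = fun b j => g j (b j) := by
    ext b j
    obtain rfl | hj := eq_or_ne j i
    · simp only [g, Function.update_self]
    · simp only [g, Function.update_of_ne hj, id_eq]
  have hmap : (fun j => (m j).map (g j)) = Function.update m i (Measure.dirac a) := by
    ext1 j
    obtain rfl | hj := eq_or_ne j i
    · simp only [g, Function.update_self, Measure.map_const, measure_univ, one_smul]
    · simp only [g, Function.update_of_ne hj, Measure.map_id]
  rw [hupdate, Measure.pi_map_pi fun j => (hg j).aemeasurable, hmap, deviation]

lemma integral_deviation [∀ j, TopologicalSpace (A j)] [OpensMeasurableSpace (∀ j, A j)] (a : A i)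
    {f : (∀ j, A j) → ℝ} (hf : Continuous f) :
    ∫ b, f b ∂deviation m i a = ∫ b, f (Function.update b i a) ∂Measure.pi m := by
  rw [← map_update_pi_eq_deviation,
    integral_map measurable_update_left.aemeasurable hf.measurable.aestronglyMeasurable]

lemma abs_integral_deviation_sub_le [∀ j, PseudoMetricSpace (A j)]
    [OpensMeasurableSpace (∀ j, A j)] {f : (∀ j, A j) → ℝ} (hf : Continuous f) {K r η : ℝ}
    (hK : ∀ b, |f b| ≤ K) (hη : ∀ b b', dist b b' ≤ r → |f b - f b'| ≤ η) {a a' : A i}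
    (ha : dist a a' ≤ r) :
    |∫ b, f b ∂deviation m i a - ∫ b, f b ∂deviation m i a'| ≤ η := by
  have hint (a : A i) : Integrable (fun b => f (Function.update b i a)) (Measure.pi m) :=
    .of_bound (hf.comp (continuous_id.update i continuous_const)).measurable.aestronglyMeasurable K
      (Eventually.of_forall fun b => hK _)
  rw [integral_deviation m i a hf, integral_deviation m i a' hf]
  exact abs_integral_sub_integral_le (hint a) (hint a') <| Eventually.of_forall fun b =>
    hη _ _ ((dist_update_update_le b i a a').trans ha)

end UnilateralDeviation

section Modulus

variable {X B : Type*} [PseudoMetricSpace X] [PseudoMetricSpace B]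

/-- The largest discrepancy `D` between two state-action pairs at distance at most `r`. It is
meaningful only for bounded `D`, since the supremum of an unbounded set is `0`. -/
def jointModulus (D : X × B → X × B → ℝ) (r : ℝ) : ℝ :=
  sSup {v : ℝ | ∃ x y : X, ∃ a b : B, dist x y + dist a b ≤ r ∧ v = D (x, a) (y, b)}

/-- The modulus of continuity of a stage cost. -/
def costModulus (c : X → B → ℝ) (r : ℝ) : ℝ :=
  jointModulus (fun q q' => |c q.1 q.2 - c q'.1 q'.2|) r

/-- The modulus of continuity `ω_δ` of the quantized kernel, in total variation. -/
def kernelModulus [MeasurableSpace X] (p : X → B → Measure X) (Q : X → X) (r : ℝ) : ℝ :=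
  jointModulus (fun q q' => tvDist ((p q.1 q.2).map Q) ((p q'.1 q'.2).map Q)) r

variable {x y : X} {a b : B} {r K : ℝ}

lemma le_jointModulus {D : X × B → X × B → ℝ} (hD : ∀ q q', D q q' ≤ K)
    (h : dist x y + dist a b ≤ r) : D (x, a) (y, b) ≤ jointModulus D r := by
  refine le_csSup ⟨K, ?_⟩ ⟨x, y, a, b, h, rfl⟩
  rintro _ ⟨x, y, a, b, -, rfl⟩
  exact hD _ _

lemma abs_sub_le_costModulus {c : X → B → ℝ} (hK : ∀ x b, |c x b| ≤ K)
    (h : dist x y + dist a b ≤ r) : |c x a - c y b| ≤ costModulus c r :=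
  le_jointModulus (D := fun q q' => |c q.1 q.2 - c q'.1 q'.2|) (K := K + K)
    (fun _ _ => (abs_sub _ _).trans (add_le_add (hK _ _) (hK _ _))) h

lemma tvDist_map_le_kernelModulus [MeasurableSpace X] {p : X → B → Measure X}
    [∀ x b, IsProbabilityMeasure (p x b)] {Q : X → X} (hQ : Measurable Q)
    (h : dist x y + dist a b ≤ r) :
    tvDist ((p x a).map Q) ((p y b).map Q) ≤ kernelModulus p Q r := by
  have hprob (q : X × B) : IsProbabilityMeasure ((p q.1 q.2).map Q) :=
    Measure.isProbabilityMeasure_map hQ.aemeasurable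
  exact le_jointModulus (D := fun q q' => tvDist ((p q.1 q.2).map Q) ((p q'.1 q'.2).map Q))
    (fun _ _ => tvDist_le_two _ _) h

lemma tendsto_costModulus {c : X → B → ℝ} (hc : UniformContinuous (Function.uncurry c)) :
    Tendsto (costModulus c) (𝓝 0) (𝓝 0) := by
  rw [Metric.tendsto_nhds]
  intro ε hε
  obtain ⟨s, hs, hclose⟩ := Metric.uniformContinuous_iff.1 hc (ε / 2) (half_pos hε)
  filter_upwards [eventually_lt_nhds hs] with r hr
  have hnonneg : 0 ≤ costModulus c r := by
    refine Real.sSup_nonneg ?_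
    rintro _ ⟨x, y, a, b, -, rfl⟩
    exact abs_nonneg _
  have hle : costModulus c r ≤ ε / 2 := by
    refine Real.sSup_le ?_ (half_pos hε).le
    rintro _ ⟨x, y, a, b, h, rfl⟩
    refine (hclose (a := (x, a)) (b := (y, b)) ?_).le
    exact (max_le_add_of_nonneg dist_nonneg dist_nonneg).trans_lt (h.trans_lt hr)
  rw [Real.dist_eq, sub_zero, abs_of_nonneg hnonneg]
  exact hle.trans_lt (half_lt_self hε)

end Modulus

section Lookahead

variable {X B : Type*} [MeasurableSpace X]

/-- The cost of the action `b` at the state `x` when the continuation values are `V`. -/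
def lookahead (c : X → B → ℝ) (p : X → B → Measure X) (V : X → ℝ) (x : X) (b : B) : ℝ :=
  c x b + ∫ y, V y ∂p x b

variable {c : X → B → ℝ} {p : X → B → Measure X} [∀ x b, IsProbabilityMeasure (p x b)]
  {V W : X → ℝ} {K M : ℝ}

lemma abs_lookahead_le (hK : ∀ x b, |c x b| ≤ K) (hM : ∀ x, |V x| ≤ M) (x : X) (b : B) :
    |lookahead c p V x b| ≤ K + M :=
  (abs_add_le _ _).trans (add_le_add (hK x b) (abs_integral_le_of_abs_le hM))

lemma abs_lookahead_sub_lookahead_le (hV : Measurable V) (hVM : ∀ x, |V x| ≤ M)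
    (hW : Measurable W) (hWK : ∀ x, |W x| ≤ K) {C : ℝ} (hVW : ∀ x, |V x - W x| ≤ C) (x : X)
    (b : B) : |lookahead c p V x b - lookahead c p W x b| ≤ C := by
  rw [lookahead, lookahead, add_sub_add_left_eq_sub]
  exact abs_integral_sub_integral_le
    (.of_bound hV.aestronglyMeasurable M (Eventually.of_forall hVM))
    (.of_bound hW.aestronglyMeasurable K (Eventually.of_forall hWK)) (Eventually.of_forall hVW)

lemma continuous_lookahead [TopologicalSpace X] [FirstCountableTopology X] [TopologicalSpace B]
    [FirstCountableTopology B] (hc : Continuous (Function.uncurry c))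
    (hp : ∀ D, MeasurableSet D → Continuous fun q : X × B => (p q.1 q.2 D).toReal)
    (hV : Measurable V) (hM : ∀ x, |V x| ≤ M) :
    Continuous (Function.uncurry (lookahead c p V)) :=
  hc.add (continuous_integral_of_setwise (p := fun q : X × B => p q.1 q.2) hp hV hM)

-- A value function that is constant on the cells integrates equally well against the quantized
-- kernel, for which alone a modulus of continuity in total variation is available.
lemma abs_lookahead_sub_le_modulus [PseudoMetricSpace X] [PseudoMetricSpace B]
    (hK : ∀ x b, |c x b| ≤ K) {Q : X → X} (hQ : Measurable Q) (hV : Measurable V)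
    (hM : ∀ x, |V x| ≤ M) (hVQ : ∀ x, V x = V (Q x)) {x y : X} {a b : B} {r : ℝ}
    (h : dist x y + dist a b ≤ r) :
    |lookahead c p V x a - lookahead c p V y b| ≤
      costModulus c r + M * kernelModulus p Q r := by
  have hprob (x : X) (b : B) : IsProbabilityMeasure ((p x b).map Q) :=
    Measure.isProbabilityMeasure_map hQ.aemeasurable
  have hquant (x : X) (b : B) : ∫ z, V z ∂p x b = ∫ z, V z ∂(p x b).map Q := by
    rw [integral_map hQ.aemeasurable hV.aestronglyMeasurable]
    exact integral_congr_ae (Eventually.of_forall hVQ)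
  have hM₀ : 0 ≤ M := (abs_nonneg _).trans (hM x)
  calc |lookahead c p V x a - lookahead c p V y b|
      = |(c x a - c y b) + (∫ z, V z ∂(p x a).map Q - ∫ z, V z ∂(p y b).map Q)| := by
        rw [lookahead, lookahead, hquant, hquant, add_sub_add_comm]
    _ ≤ |c x a - c y b| + |∫ z, V z ∂(p x a).map Q - ∫ z, V z ∂(p y b).map Q| := abs_add_le _ _
    _ ≤ costModulus c r + M * kernelModulus p Q r := add_le_add (abs_sub_le_costModulus hK h) <|
        (abs_integral_sub_integral_le_mul_tvDist _ _ hV hM).trans <|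
          mul_le_mul_of_nonneg_left (tvDist_map_le_kernelModulus hQ h) hM₀

end Lookahead

section Infima

variable {α : Type*} [Nonempty α] {C : ℝ}

lemma abs_csInf_le {s : Set ℝ} (hs : s.Nonempty) (hC : ∀ v ∈ s, |v| ≤ C) : |sInf s| ≤ C := by
  obtain ⟨v, hv⟩ := hs
  have hbdd : BddBelow s := ⟨-C, fun w hw => neg_le_of_abs_le (hC w hw)⟩
  exact abs_le.2 ⟨le_csInf ⟨v, hv⟩ fun w hw => neg_le_of_abs_le (hC w hw),
    (csInf_le hbdd hv).trans (le_of_abs_le (hC v hv))⟩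

lemma abs_ciInf_le {g : α → ℝ} (hC : ∀ a, |g a| ≤ C) : |⨅ a, g a| ≤ C :=
  abs_csInf_le (Set.range_nonempty g) (Set.forall_mem_range.2 hC)

lemma abs_sInf_sub_iInf_le {f g : α → ℝ} {S : Set α} (hg : BddBelow (Set.range g))
    (hgf : ∀ a ∈ S, g a ≤ f a + C) (hfg : ∀ a, ∃ a' ∈ S, f a' ≤ g a + C) :
    |sInf {v : ℝ | ∃ a ∈ S, v = f a} - ⨅ a, g a| ≤ C := by
  have hlower : ∀ v ∈ {v : ℝ | ∃ a ∈ S, v = f a}, (⨅ a, g a) - C ≤ v := by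
    rintro _ ⟨a, ha, rfl⟩
    linarith [ciInf_le hg a, hgf a ha]
  have hne : {v : ℝ | ∃ a ∈ S, v = f a}.Nonempty := by
    obtain ⟨a, ha, -⟩ := hfg (Classical.arbitrary α)
    exact ⟨f a, a, ha, rfl⟩
  have hge : (⨅ a, g a) - C ≤ sInf {v : ℝ | ∃ a ∈ S, v = f a} := le_csInf hne hlower
  have hle : sInf {v : ℝ | ∃ a ∈ S, v = f a} - C ≤ ⨅ a, g a := by
    refine le_ciInf fun a => ?_
    obtain ⟨a', ha', hfa'⟩ := hfg a
    linarith [csInf_le ⟨_, hlower⟩ ⟨a', ha', rfl⟩]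
  exact abs_le.2 ⟨by linarith, by linarith⟩

end Infima

section Quantization

variable {X : Type*} [MeasurableSpace X]

lemma isProbabilityMeasure_cellMeasure {ν : Measure X} [IsFiniteMeasure ν] {Q : X → X} {z : X}
    (hz : ν (Q ⁻¹' {z}) ≠ 0) : IsProbabilityMeasure (cellMeasure ν Q z) :=
  ProbabilityTheory.cond_isProbabilityMeasure hz

lemma ae_cellMeasure_eq [MeasurableSingletonClass X] (ν : Measure X) {Q : X → X}
    (hQ : Measurable Q) (z : X) : ∀ᵐ y ∂cellMeasure ν Q z, Q y = z :=
  ProbabilityTheory.ae_cond_mem (hQ (measurableSet_singleton z))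

/-- `Q` is a measurable map of finite range that moves points by at most `δ`, such as a
nearest-point projection onto a finite `δ`-net. -/
structure IsQuantizer [PseudoMetricSpace X] (Q : X → X) (δ : ℝ) : Prop where
  measurable : Measurable Q
  finite_range : (Set.range Q).Finite
  dist_le : ∀ x, dist x (Q x) ≤ δ

variable [PseudoMetricSpace X] {Q : X → X} {δ : ℝ}

lemma IsQuantizer.measurable_diagonal [MeasurableSingletonClass X] {Y : Type*} [MeasurableSpace Y]
    (hQ : IsQuantizer Q δ) {V : X → X → Y} (hV : ∀ z, Measurable (V z)) :
    Measurable fun x => V (Q x) x :=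
  (SimpleFunc.mk Q (fun z => hQ.measurable (measurableSet_singleton z))
    hQ.finite_range).measurable_bind V hV

lemma IsQuantizer.dist_le_two_mul (hQ : IsQuantizer Q δ) {x y : X} (h : Q x = Q y) :
    dist x y ≤ 2 * δ :=
  calc dist x y ≤ dist x (Q x) + dist y (Q x) := dist_triangle_right _ _ _
    _ ≤ δ + δ := add_le_add (hQ.dist_le x) (h ▸ hQ.dist_le y)
    _ = 2 * δ := (two_mul δ).symm

end Quantization

section OneStage

variable {X : Type*} [PseudoMetricSpace X] [MeasurableSpace X] [OpensMeasurableSpace X]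

lemma abs_integral_cell_sub_le {B : Type*} [TopologicalSpace B] [MeasurableSpace B]
    [OpensMeasurableSpace B] {F : X → B → ℝ} (hF : Continuous (Function.uncurry F)) {K r η : ℝ}
    (hK : ∀ x b, |F x b| ≤ K) (hη : ∀ x y b, dist x y ≤ r → |F x b - F y b| ≤ η) {κ : Measure X}
    [IsProbabilityMeasure κ] {x : X} (hκ : ∀ᵐ y ∂κ, dist y x ≤ r) (μ : Measure B)
    [IsProbabilityMeasure μ] : |∫ y, ∫ b, F y b ∂μ ∂κ - ∫ b, F x b ∂μ| ≤ η := by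
  have hint (y : X) : Integrable (F y) μ :=
    .of_bound (hF.uncurry_left y).measurable.aestronglyMeasurable K (Eventually.of_forall (hK y))
  have hint_avg : Integrable (fun y => ∫ b, F y b ∂μ) κ :=
    .of_bound (continuous_integral_of_continuous_uncurry hF hK).measurable.aestronglyMeasurable K
      (Eventually.of_forall fun y => abs_integral_le_of_abs_le (hK y))
  have hcell : ∀ᵐ y ∂κ, |∫ b, F y b ∂μ - ∫ b, F x b ∂μ| ≤ η := by
    filter_upwards [hκ] with y hy
    exact abs_integral_sub_integral_le (hint y) (hint x)
      (Eventually.of_forall fun b => hη y x b hy)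
  simpa using abs_integral_sub_integral_le hint_avg (integrable_const (∫ b, F x b ∂μ)) hcell

variable {ι : Type*} [Fintype ι] [DecidableEq ι] {A : ι → Type*} [∀ j, PseudoMetricSpace (A j)]
  [∀ j, MeasurableSpace (A j)] [OpensMeasurableSpace (∀ j, A j)] {i : ι} [Nonempty (A i)]

-- Moving the state within its cell and moving the action to the net each cost at most `η`.
lemma abs_sInf_deviation_sub_iInf_deviation_le {F G : X → (∀ j, A j) → ℝ}
    (hF : Continuous (Function.uncurry F)) {K : ℝ} (hFK : ∀ x b, |F x b| ≤ K)
    {x : X} (hG : Continuous (G x)) (hGK : ∀ b, |G x b| ≤ K) {C r η δ : ℝ} (hδr : δ ≤ r)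
    (hFG : ∀ b, |F x b - G x b| ≤ C)
    (hη : ∀ x y b b', dist x y + dist b b' ≤ r → |F x b - F y b'| ≤ η)
    (m : ∀ j, Measure (A j)) [∀ j, IsProbabilityMeasure (m j)] {S : Set (A i)}
    (hS : ∀ a, ∃ a' ∈ S, dist a a' ≤ δ) {κ : Measure X} [IsProbabilityMeasure κ]
    (hκ : ∀ᵐ y ∂κ, dist y x ≤ r) :
    |sInf {v : ℝ | ∃ a ∈ S, v = ∫ y, ∫ b, F y b ∂deviation m i a ∂κ} -
      ⨅ a, ∫ b, G x b ∂deviation m i a| ≤ 2 * η + C := by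
  have hFx : Continuous (F x) := hF.uncurry_left x
  have hstate (a : A i) :
      |∫ y, ∫ b, F y b ∂deviation m i a ∂κ - ∫ b, F x b ∂deviation m i a| ≤ η :=
    abs_integral_cell_sub_le hF hFK
      (fun x y b h => hη x y b b (by rwa [dist_self, add_zero])) hκ _
  have hmodel (a : A i) : |∫ b, F x b ∂deviation m i a - ∫ b, G x b ∂deviation m i a| ≤ C :=
    abs_integral_sub_integral_le
      (.of_bound hFx.measurable.aestronglyMeasurable K (Eventually.of_forall (hFK x)))
      (.of_bound hG.measurable.aestronglyMeasurable K (Eventually.of_forall hGK))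
      (Eventually.of_forall hFG)
  have haction {a a' : A i} (h : dist a a' ≤ δ) :
      |∫ b, F x b ∂deviation m i a - ∫ b, F x b ∂deviation m i a'| ≤ η :=
    abs_integral_deviation_sub_le m i hFx (hFK x)
      (fun b b' h => hη x x b b' (by rwa [dist_self, zero_add])) (h.trans hδr)
  have hη₀ : 0 ≤ η := (abs_nonneg _).trans (hstate (Classical.arbitrary (A i)))
  refine abs_sInf_sub_iInf_le ⟨-K, ?_⟩ (fun a _ => ?_) fun a => ?_
  · exact Set.forall_mem_range.2 fun a => neg_le_of_abs_le (abs_integral_le_of_abs_le hGK)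
  · linarith [abs_le.1 (hstate a), abs_le.1 (hmodel a)]
  · obtain ⟨a', ha', hdist⟩ := hS a
    exact ⟨a', ha', by
      linarith [abs_le.1 (hstate a'), abs_le.1 (haction hdist), abs_le.1 (hmodel a)]⟩

end OneStage

lemma abs_le_of_backward_recursion {X : Type*} {V : ℕ → X → ℝ} {T : ℕ} {K : ℝ}
    (hterminal : ∀ x, V T x = 0)
    (hstep : ∀ t < T, ∀ C, (∀ x, |V (t + 1) x| ≤ C) → ∀ x, |V t x| ≤ K + C) {t : ℕ} (ht : t ≤ T) :
    ∀ x, |V t x| ≤ (T - t) * K := by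
  induction ht using Nat.decreasingInduction with
  | self => simp [hterminal]
  | of_succ t ht ih =>
    intro x
    calc |V t x| ≤ K + (T - (t + 1 : ℕ)) * K := hstep t ht _ ih x
      _ = (T - t) * K := by
        push_cast
        ring

section BestResponse

variable {X : Type*} [MeasurableSpace X] {ι : Type*} [Fintype ι] [DecidableEq ι] {A : ι → Type*}
  [∀ j, MeasurableSpace (A j)]

/-- `J` is the family of best-response values of player `i`, with stage cost `c` and horizon `T`,
against the Markov policies `σ` of the other players; the policy `σ · · i` is ignored. -/
structure IsBestResponseValue (c : X → (∀ j, A j) → ℝ) (p : X → (∀ j, A j) → Measure X) (T : ℕ)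
    (σ : ℕ → X → ∀ j, Measure (A j)) (i : ι) (J : ℕ → X → ℝ) : Prop where
  terminal : ∀ x, J T x = 0
  recursion : ∀ t < T, ∀ x,
    J t x = ⨅ a, ∫ b, lookahead c p (J (t + 1)) x b ∂deviation (σ t x) i a

/-- `J` is the extension to `X`, constant on the fibres of the quantizer `Q`, of the best-response
values of player `i` in the finite model with states `Set.range Q` and own actions `S`, where
`κ z` is the weight put on the cell `Q ⁻¹' {z}`. -/
structure IsFiniteBestResponseValue (c : X → (∀ j, A j) → ℝ) (p : X → (∀ j, A j) → Measure X)
    (T : ℕ) (σ : ℕ → X → ∀ j, Measure (A j)) (i : ι) (Q : X → X) (κ : X → Measure X)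
    (S : Set (A i)) (J : ℕ → X → ℝ) : Prop where
  terminal : ∀ x, J T x = 0
  eq_comp_quantizer : ∀ t ≤ T, ∀ x, J t x = J t (Q x)
  recursion : ∀ t < T, ∀ x, J t (Q x) = sInf {v : ℝ | ∃ a ∈ S, v =
    ∫ y, ∫ b, lookahead c p (J (t + 1)) y b ∂deviation (σ t (Q x)) i a ∂κ (Q x)}

variable {c : X → (∀ j, A j) → ℝ} {p : X → (∀ j, A j) → Measure X}
  {T t : ℕ} {σ : ℕ → X → ∀ j, Measure (A j)} {i : ι} {Q : X → X} {κ : X → Measure X}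
  {S : Set (A i)} {J Jd : ℕ → X → ℝ} {K δ : ℝ}

lemma IsFiniteBestResponseValue.measurable [PseudoMetricSpace X] [MeasurableSingletonClass X]
    (hJ : IsFiniteBestResponseValue c p T σ i Q κ S J) (hQ : IsQuantizer Q δ) (ht : t ≤ T) :
    Measurable (J t) := by
  rw [funext (hJ.eq_comp_quantizer t ht)]
  exact hQ.measurable_diagonal (V := fun z _ => J t z) fun z => measurable_const

variable [∀ x b, IsProbabilityMeasure (p x b)]

lemma IsBestResponseValue.abs_le [Nonempty (A i)] (hJ : IsBestResponseValue c p T σ i J)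
    (hK : ∀ x b, |c x b| ≤ K) (hσ : ∀ t < T, ∀ x j, IsProbabilityMeasure (σ t x j)) (ht : t ≤ T) :
    ∀ x, |J t x| ≤ (T - t) * K := by
  refine abs_le_of_backward_recursion hJ.terminal (fun t ht C hC x => ?_) ht
  have := hσ t ht x
  rw [hJ.recursion t ht x]
  exact abs_ciInf_le fun a => abs_integral_le_of_abs_le (abs_lookahead_le hK hC x)

lemma IsFiniteBestResponseValue.abs_le (hJ : IsFiniteBestResponseValue c p T σ i Q κ S J)
    (hK : ∀ x b, |c x b| ≤ K) (hσ : ∀ t < T, ∀ x j, IsProbabilityMeasure (σ t x j))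
    (hκ : ∀ x, IsProbabilityMeasure (κ (Q x))) (hS : S.Nonempty) (ht : t ≤ T) :
    ∀ x, |J t x| ≤ (T - t) * K := by
  refine abs_le_of_backward_recursion hJ.terminal (fun t ht C hC x => ?_) ht
  have := hσ t ht (Q x)
  have := hκ x
  rw [hJ.eq_comp_quantizer t ht.le x, hJ.recursion t ht x]
  obtain ⟨a, ha⟩ := hS
  refine abs_csInf_le ⟨_, a, ha, rfl⟩ ?_
  rintro _ ⟨a, -, rfl⟩
  exact abs_integral_le_of_abs_le fun y => abs_integral_le_of_abs_le (abs_lookahead_le hK hC y)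

variable [MetricSpace X] [BorelSpace X] [∀ j, PseudoMetricSpace (A j)]
  [OpensMeasurableSpace (∀ j, A j)] [Nonempty (A i)]

-- For frozen opponents' policies the value is an infimum of continuous functions of the state;
-- these policies depend on the state only through its cell.
lemma IsBestResponseValue.measurable (hJ : IsBestResponseValue c p T σ i J)
    (hc : Continuous (Function.uncurry c)) (hK : ∀ x b, |c x b| ≤ K)
    (hp : ∀ D, MeasurableSet D → Continuous fun q : X × (∀ j, A j) => (p q.1 q.2 D).toReal)
    (hσ : ∀ t < T, ∀ x j, IsProbabilityMeasure (σ t x j)) (hQ : IsQuantizer Q δ)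
    (hσQ : ∀ t < T, ∀ x, σ t x = σ t (Q x)) (ht : t ≤ T) : Measurable (J t) := by
  induction ht using Nat.decreasingInduction with
  | self =>
    rw [funext hJ.terminal]
    exact measurable_const
  | of_succ t ht ih =>
    have hbound := hJ.abs_le hK hσ ht
    have hL := continuous_lookahead hc hp ih hbound
    have hLK := abs_lookahead_le (p := p) hK hbound
    have hprob := hσ t ht
    have hcell (z : X) : Measurable fun x =>
        ⨅ a, ∫ b, lookahead c p (J (t + 1)) x b ∂deviation (σ t z) i a :=
      (upperSemicontinuous_ciInf
        (fun x => ⟨_, Set.forall_mem_range.2 fun a =>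
          neg_le_of_abs_le (abs_integral_le_of_abs_le (hLK x))⟩)
        fun a => (continuous_integral_of_continuous_uncurry (μ := deviation (σ t z) i a) hL
          hLK).upperSemicontinuous).measurable
    have hJt : J t = fun x =>
        ⨅ a, ∫ b, lookahead c p (J (t + 1)) x b ∂deviation (σ t (Q x)) i a := by
      ext x
      rw [hJ.recursion t ht x, ← hσQ t ht x]
    rw [hJt]
    exact hQ.measurable_diagonal hcell

lemma abs_finiteBestResponseValue_sub_le
    (hJd : IsFiniteBestResponseValue c p T σ i Q κ S Jd) (hJ : IsBestResponseValue c p T σ i J)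
    (hc : Continuous (Function.uncurry c)) (hK₀ : 0 ≤ K) (hK : ∀ x b, |c x b| ≤ K)
    (hp : ∀ D, MeasurableSet D → Continuous fun q : X × (∀ j, A j) => (p q.1 q.2 D).toReal)
    (hσ : ∀ t < T, ∀ x j, IsProbabilityMeasure (σ t x j)) (hσQ : ∀ t < T, ∀ x, σ t x = σ t (Q x))
    (hQ : IsQuantizer Q δ) (hS : ∀ a, ∃ a' ∈ S, dist a a' ≤ δ)
    (hκ : ∀ x, IsProbabilityMeasure (κ (Q x))) (hκQ : ∀ x, ∀ᵐ y ∂κ (Q x), Q y = Q x)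
    (ht : t ≤ T) (x : X) :
    |Jd t x - J t x| ≤
      (T - t) * (2 * (costModulus c (2 * δ) + T * K * kernelModulus p Q (2 * δ))) := by
  have hδ : δ ≤ 2 * δ := le_mul_of_one_le_left (dist_nonneg.trans (hQ.dist_le x)) one_le_two
  have hS₀ : S.Nonempty := (hS (Classical.arbitrary (A i))).imp fun _ h => h.1
  have hbound {u : ℕ} : (T - u : ℝ) * K ≤ T * K :=
    mul_le_mul_of_nonneg_right (sub_le_self _ u.cast_nonneg) hK₀
  have hJdK {u : ℕ} (hu : u ≤ T) (x : X) : |Jd u x| ≤ T * K :=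
    (hJd.abs_le hK hσ hκ hS₀ hu x).trans hbound
  have hJK {u : ℕ} (hu : u ≤ T) (x : X) : |J u x| ≤ T * K := (hJ.abs_le hK hσ hu x).trans hbound
  have hJdm {u : ℕ} (hu : u ≤ T) : Measurable (Jd u) := hJd.measurable hQ hu
  have hJm {u : ℕ} (hu : u ≤ T) : Measurable (J u) := hJ.measurable hc hK hp hσ hQ hσQ hu
  refine abs_le_of_backward_recursion (V := fun t x => Jd t x - J t x)
    (fun x => by rw [hJd.terminal, hJ.terminal, sub_zero]) (fun u hu C hC x => ?_) ht x
  have := hσ u hu (Q x)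
  have := hκ x
  rw [hJd.eq_comp_quantizer u hu.le x, hJd.recursion u hu x, hJ.recursion u hu x, hσQ u hu x]
  refine abs_sInf_deviation_sub_iInf_deviation_le
    (continuous_lookahead hc hp (hJdm hu) (hJdK hu)) (abs_lookahead_le hK (hJdK hu))
    ((continuous_lookahead hc hp (hJm hu) (hJK hu)).uncurry_left x)
    (abs_lookahead_le hK (hJK hu) x) hδ
    (abs_lookahead_sub_lookahead_le (hJdm hu) (hJdK hu) (hJm hu) (hJK hu) hC x)
    (fun _ _ _ _ => abs_lookahead_sub_le_modulus hK hQ.measurable (hJdm hu) (hJdK hu)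
      (hJd.eq_comp_quantizer _ hu)) _ hS ?_
  filter_upwards [hκQ x] with y hy using hQ.dist_le_two_mul hy

end BestResponse

theorem finite_horizon_value_approximation_general
    {X : Type*} [MetricSpace X] [Nonempty X] [MeasurableSpace X] [BorelSpace X]
    {ι : Type*} [Fintype ι] [DecidableEq ι] {A : ι → Type*} [∀ j, PseudoMetricSpace (A j)]
    [∀ j, Nonempty (A j)] [∀ j, MeasurableSpace (A j)] [OpensMeasurableSpace (∀ j, A j)]
    {c : X → (∀ j, A j) → ℝ} (hc : UniformContinuous (Function.uncurry c)) {K : ℝ}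
    (hK : ∀ x b, |c x b| ≤ K) {p : X → (∀ j, A j) → Measure X}
    [∀ x b, IsProbabilityMeasure (p x b)]
    (hp : ∀ D, MeasurableSet D → Continuous fun q : X × (∀ j, A j) => (p q.1 q.2 D).toReal)
    {T : ℕ} {i : ι} {Q : ℝ → X → X} (hQ : ∀ δ > 0, IsQuantizer (Q δ) δ)
    (hmodulus : Tendsto (fun δ => kernelModulus p (Q δ) (2 * δ)) (𝓝[>] 0) (𝓝 0))
    {ν : ℝ → Measure X} (hν : ∀ δ > 0, IsFiniteMeasure (ν δ))
    (hν_cell : ∀ δ > 0, ∀ x, ν δ (Q δ ⁻¹' {Q δ x}) ≠ 0)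
    {S : ℝ → Set (A i)} (hS : ∀ δ > 0, ∀ a, ∃ a' ∈ S δ, dist a a' ≤ δ)
    {σ : ℝ → ℕ → X → ∀ j, Measure (A j)}
    (hσ : ∀ δ > 0, ∀ t < T, ∀ x j, IsProbabilityMeasure (σ δ t x j))
    (hσQ : ∀ δ > 0, ∀ t < T, ∀ x, σ δ t x = σ δ t (Q δ x)) {Jd J : ℝ → ℕ → X → ℝ}
    (hJd : ∀ δ > 0, IsFiniteBestResponseValue c p T (σ δ) i (Q δ) (cellMeasure (ν δ) (Q δ)) (S δ)
      (Jd δ))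
    (hJ : ∀ δ > 0, IsBestResponseValue c p T (σ δ) i (J δ)) {t : ℕ} (ht : t ≤ T) :
    Tendsto (fun δ => ⨆ x, |Jd δ t x - J δ t x|) (𝓝[>] 0) (𝓝 0) := by
  have hK₀ : 0 ≤ K := (abs_nonneg _).trans (hK (Classical.arbitrary X) (Classical.arbitrary _))
  have hcost : Tendsto (fun δ => costModulus c (2 * δ)) (𝓝[>] 0) (𝓝 0) := by
    refine (tendsto_costModulus hc).comp (Tendsto.mono_left ?_ nhdsWithin_le_nhds)
    exact Continuous.tendsto' (by fun_prop) 0 0 (mul_zero 2)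
  have hbound : Tendsto (fun δ => (T - t : ℝ) *
      (2 * (costModulus c (2 * δ) + T * K * kernelModulus p (Q δ) (2 * δ)))) (𝓝[>] 0) (𝓝 0) := by
    simpa using ((hcost.add (hmodulus.const_mul (T * K))).const_mul 2).const_mul (T - t : ℝ)
  refine squeeze_zero' (Eventually.of_forall fun δ => Real.iSup_nonneg fun x => abs_nonneg _) ?_
    hbound
  filter_upwards [self_mem_nhdsWithin] with δ (hδ : 0 < δ)
  have := hν δ hδ
  exact ciSup_le <| abs_finiteBestResponseValue_sub_le (hJd δ hδ) (hJ δ hδ) hc.continuous hK₀ hK hp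
    (hσ δ hδ) (hσQ δ hδ) (hQ δ hδ) (hS δ hδ)
    (fun x => isProbabilityMeasure_cellMeasure (hν_cell δ hδ x))
    (fun x => ae_cellMeasure_eq _ (hQ δ hδ).measurable _) ht

/-- Finite-horizon approximation of nonzero-sum Markov games (Theorem 4.1 of the paper):
convergence of the extended finite-model best-response values to the original-model
best-response values against the extended equilibrium policies. -/
theorem finite_horizon_value_approximation
    -- compact metric state space
    (X : Type*) [MetricSpace X] [CompactSpace X] [Nonempty X]
    [MeasurableSpace X] [BorelSpace X]
    -- compact metric action spaces of the N players
    (N : ℕ) (A : Fin N → Type*) [∀ i, MetricSpace (A i)] [∀ i, CompactSpace (A i)]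
    [∀ i, Nonempty (A i)] [∀ i, MeasurableSpace (A i)] [∀ i, BorelSpace (A i)]
    -- bounded continuous one-stage cost functions
    (c : Fin N → X → (∀ i, A i) → ℝ)
    (hc : ∀ i, Continuous fun q : X × (∀ i, A i) => c i q.1 q.2)
    -- setwise continuous Borel stochastic kernel
    (p : X → (∀ i, A i) → Measure X)
    (hp_prob : ∀ x a, IsProbabilityMeasure (p x a))
    (hp_meas : ∀ D : Set X, MeasurableSet D →
      Measurable fun q : X × (∀ i, A i) => p q.1 q.2 D)
    (hp_setwise : ∀ D : Set X, MeasurableSet D →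
      Continuous fun q : X × (∀ i, A i) => (p q.1 q.2 D).toReal)
    -- finite horizon
    (T : ℕ)
    -- quantization data: finite δ-nets, nearest-point quantizer, weighting measures
    (Xd : ℝ → Finset X) (Q : ℝ → X → X) (Ad : ℝ → ∀ i, Finset (A i)) (ν : ℝ → Measure X)
    (hXd_net : ∀ δ > (0:ℝ), ∀ x : X, ∃ z ∈ Xd δ, dist x z ≤ δ)
    (hQ_mem : ∀ δ > (0:ℝ), ∀ x, Q δ x ∈ Xd δ)
    (hQ_near : ∀ δ > (0:ℝ), ∀ x, ∀ z ∈ Xd δ, dist x (Q δ x) ≤ dist x z)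
    (hQ_meas : ∀ δ > (0:ℝ), Measurable (Q δ))
    (hAd_net : ∀ δ > (0:ℝ), ∀ i, ∀ a : A i, ∃ b ∈ Ad δ i, dist a b ≤ δ)
    (hν_prob : ∀ δ > (0:ℝ), IsProbabilityMeasure (ν δ))
    (hν_pos : ∀ δ > (0:ℝ), ∀ z ∈ Xd δ, 0 < ν δ (Q δ ⁻¹' {z}))
    -- the quantization condition `lim_{δ→0} ω_δ(2δ) = 0`
    (hquant : Tendsto
      (fun δ : ℝ => sSup {v : ℝ | ∃ x y : X, ∃ a b : ∀ i, A i,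
        dist x y + dist a b ≤ 2 * δ ∧
        v = tvDist ((p x a).map (Q δ)) ((p y b).map (Q δ))})
      (𝓝[>] 0) (𝓝 0))
    -- (already extended) Markov policies of the finite δ-model: probability measures
    -- supported on the finite action nets, piecewise constant on quantization cells
    (π : ℝ → (i : Fin N) → ℕ → X → Measure (A i))
    (hπ_prob : ∀ δ > (0:ℝ), ∀ i t, t < T → ∀ x, IsProbabilityMeasure (π δ i t x))
    (hπ_supp : ∀ δ > (0:ℝ), ∀ i t, t < T → ∀ x, π δ i t x (Ad δ i) = 1)
    (hπ_const : ∀ δ > (0:ℝ), ∀ i t, t < T → ∀ x, π δ i t x = π δ i t (Q δ x))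
    -- the extended finite-model best-response values Ĵ*_{δ,t}(π^{*,-i}_δ;·)
    (Jd : ℝ → Fin N → ℕ → X → ℝ)
    (hJd_const : ∀ δ > (0:ℝ), ∀ i t, t ≤ T → ∀ x, Jd δ i t x = Jd δ i t (Q δ x))
    (hJd_T : ∀ δ > (0:ℝ), ∀ i x, Jd δ i T x = 0)
    -- backward recursion of the finite δ-model, per state of the net
    (hJd_rec : ∀ δ > (0:ℝ), ∀ i t, t < T → ∀ z ∈ Xd δ,
      Jd δ i t z = sInf {v : ℝ | ∃ a ∈ Ad δ i, v =
        ∫ x, (∫ b, (c i x b + ∫ y, Jd δ i (t+1) y ∂(p x b))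
            ∂(Measure.pi (Function.update (fun j => π δ j t z) i (Measure.dirac a))))
          ∂(cellMeasure (ν δ) (Q δ) z)})
    -- the minimum is attained by the equilibrium mixed action π^{*,i}_{δ,t}(z)
    (hJd_attain : ∀ δ > (0:ℝ), ∀ i t, t < T → ∀ z ∈ Xd δ,
      Jd δ i t z =
        ∫ x, (∫ b, (c i x b + ∫ y, Jd δ i (t+1) y ∂(p x b))
            ∂(Measure.pi fun j => π δ j t z))
          ∂(cellMeasure (ν δ) (Q δ) z))
    -- the original-model best-response values J*_t(π^{*,-i}_δ;·) against the extended policies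
    (Js : ℝ → Fin N → ℕ → X → ℝ)
    (hJs_T : ∀ δ > (0:ℝ), ∀ i x, Js δ i T x = 0)
    (hJs_rec : ∀ δ > (0:ℝ), ∀ i t, t < T → ∀ x : X,
      Js δ i t x = ⨅ a : A i,
        ∫ b, (c i x b + ∫ y, Js δ i (t+1) y ∂(p x b))
          ∂(Measure.pi (Function.update (fun j => π δ j t x) i (Measure.dirac a)))) :
    -- conclusion: uniform convergence of the value functions as δ → 0
    ∀ i : Fin N, ∀ t ≤ T,
      Tendsto (fun δ : ℝ => ⨆ x : X, |Jd δ i t x - Js δ i t x|) (𝓝[>] 0) (𝓝 0) := by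
  intro i t ht
  obtain ⟨K, hK⟩ := isCompact_univ.exists_bound_of_continuousOn (hc i).continuousOn
  exact finite_horizon_value_approximation_general
    (CompactSpace.uniformContinuous_of_continuous (hc i)) (fun x b => hK (x, b) trivial) hp_setwise
    (fun δ hδ => ⟨hQ_meas δ hδ, (Xd δ).finite_toSet.subset (Set.range_subset_iff.2 (hQ_mem δ hδ)),
      fun x => (hXd_net δ hδ x).elim fun z hz => (hQ_near δ hδ x z hz.1).trans hz.2⟩)
    hquant (fun δ hδ => have := hν_prob δ hδ; inferInstance)
    (fun δ hδ x => (hν_pos δ hδ _ (hQ_mem δ hδ x)).ne') (S := fun δ => Ad δ i)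
    (fun δ hδ => hAd_net δ hδ i) (σ := fun δ t x j => π δ j t x)
    (fun δ hδ t ht x j => hπ_prob δ hδ j t ht x)
    (fun δ hδ t ht x => funext fun j => hπ_const δ hδ j t ht x)
    (fun δ hδ => ⟨hJd_T δ hδ i, hJd_const δ hδ i,
      fun t ht x => hJd_rec δ hδ i t ht _ (hQ_mem δ hδ x)⟩)
    (fun δ hδ => ⟨hJs_T δ hδ i, hJs_rec δ hδ i⟩) ht

end
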